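/- The map Ω : PPU(b)⁻ → Sub(V⊕) is an isomorphism of partially ordered sets, where PPU(b)⁻ carries the right-divisibility order (φ ⊑ ψ :⟺ ψ = χφ for some χ ∈ PPU(b)⁻) and Sub(V⊕) is ordered by inclusion. In particular, PPU(b)⁻ with the right-divisibility order is a modular lattice. -/

import Mathlib

open Finsupp

variable (k : Type*) [Field k] (V : Type*) [AddCommGroup V] [Module k V]

/-- Multiplication by `t^n` on `V[t,t⁻¹] := ℤ →₀ V` (writing `v = ∑ᵢ tⁱ vᵢ` as the
finitely supported function `i ↦ vᵢ`). -/
noncomputable def shift (n : ℤ) : (ℤ →₀ V) ≃ₗ[k] (ℤ →₀ V) :=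
  Finsupp.domLCongr (Equiv.addRight n)

/-- The coefficient of `tⁿ` of `b̃(v,w) = ∑ₙ tⁿ (∑ᵢ b(v_{i-n}, w_i))`. -/
noncomputable def Btilde (b : LinearMap.BilinForm k V) (n : ℤ) (v w : ℤ →₀ V) : k :=
  w.sum fun i wi => b (v (i - n)) wi

/-- `φ` is a paraunitary transformation: an invertible `k[t,t⁻¹]`-linear
(i.e. `k`-linear and commuting with multiplication by `t`) endomorphism of
`V[t,t⁻¹]` preserving `b̃`. -/
def IsPU (b : LinearMap.BilinForm k V) (φ : (ℤ →₀ V) ≃ₗ[k] (ℤ →₀ V)) : Prop :=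
  (∀ v, φ (shift k V 1 v) = shift k V 1 (φ v)) ∧
  ∀ (n : ℤ) (v w : ℤ →₀ V), Btilde k V b n (φ v) (φ w) = Btilde k V b n v w

/-- The specialization `t = 1` of a `k[t,t⁻¹]`-linear endomorphism `f = ∑ᵢ tⁱ fᵢ`
of `V[t,t⁻¹]`, i.e. the endomorphism `ε₁(f) = ∑ᵢ fᵢ` of `V`. -/
noncomputable def eps (f : (ℤ →₀ V) →ₗ[k] (ℤ →₀ V)) : V →ₗ[k] V :=
  (Finsupp.lsum k fun _ : ℤ => (LinearMap.id : V →ₗ[k] V)) ∘ₗ f ∘ₗ Finsupp.lsingle 0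

/-- `φ` is pure paraunitary: paraunitary and specializing to the identity at `t = 1`. -/
def IsPPU (b : LinearMap.BilinForm k V) (φ : (ℤ →₀ V) ≃ₗ[k] (ℤ →₀ V)) : Prop :=
  IsPU k V b φ ∧ eps k V (φ : (ℤ →₀ V) →ₗ[k] (ℤ →₀ V)) = LinearMap.id

/-- `φ ∈ PPU(b)⁻`: pure paraunitary and all Laurent coefficients `φᵢ` for `i > 0` vanish. -/
def PPUneg (b : LinearMap.BilinForm k V) (φ : (ℤ →₀ V) ≃ₗ[k] (ℤ →₀ V)) : Prop :=
  IsPPU k V b φ ∧ ∀ (x : V) (i : ℤ), 0 < i → φ (Finsupp.single 0 x) i = 0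

/-- `V[t⁻¹] ⊆ V[t,t⁻¹]`: the elements with `vᵢ = 0` for `i > 0`. -/
def Vneg : Submodule k (ℤ →₀ V) where
  carrier := {v | ∀ i : ℤ, 0 < i → v i = 0}
  add_mem' := by
    intro a c ha hc i hi
    simp only [Set.mem_setOf_eq] at *
    simp [Finsupp.add_apply, ha i hi, hc i hi]
  zero_mem' := by intro i _; rfl
  smul_mem' := by
    intro c x hx i hi
    simp only [Set.mem_setOf_eq] at *
    simp [Finsupp.smul_apply, hx i hi]

/-- Multiplication by `t⁻¹` descends to the quotient `V⊕ = V[t,t⁻¹]/V[t⁻¹]`,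
making `V⊕` a module over `k[t⁻¹]`. -/
noncomputable def shiftQ : ((ℤ →₀ V) ⧸ Vneg k V) →ₗ[k] ((ℤ →₀ V) ⧸ Vneg k V) :=
  Submodule.mapQ (Vneg k V) (Vneg k V) (shift k V (-1)).toLinearMap (by
    intro v hv i hi
    have h : (shift k V (-1)).toLinearMap v i = v (i + 1) := by
      simp [shift, Finsupp.domLCongr_apply, Finsupp.equivMapDomain_apply]
    rw [h]
    exact hv (i + 1) (by omega))

/-- A finitely generated `k[t⁻¹]`-submodule of `V⊕`: the `k`-span of the
`k[t⁻¹]`-orbit (under multiplication by powers of `t⁻¹`) of a finite set. -/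
def FGSubQ (U : Submodule k ((ℤ →₀ V) ⧸ Vneg k V)) : Prop :=
  ∃ S : Finset ((ℤ →₀ V) ⧸ Vneg k V),
    U = Submodule.span k {x | ∃ s ∈ S, ∃ n : ℕ, x = (shiftQ k V ^ n) s}

/-- The kernel `Ω(φ) ⊆ V⊕` of the endomorphism of `V⊕ = V[t,t⁻¹]/V[t⁻¹]` induced by `φ`. -/
noncomputable def OmegaSub (φ : (ℤ →₀ V) ≃ₗ[k] (ℤ →₀ V)) :
    Submodule k ((ℤ →₀ V) ⧸ Vneg k V) :=
  Submodule.map (Vneg k V).mkQ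
    (Submodule.comap (φ : (ℤ →₀ V) →ₗ[k] (ℤ →₀ V)) (Vneg k V))

variable {k V} in
/-- The right-divisibility order on `PPU(b)⁻`: `φ ⊑ ψ` iff `φ` right-divides `ψ` in
`PPU(b)⁻`. -/
def DvdLe (b : LinearMap.BilinForm k V) (φ ψ : (ℤ →₀ V) ≃ₗ[k] (ℤ →₀ V)) : Prop :=
  ∃ χ, PPUneg k V b χ ∧ ψ = χ * φ

variable {k V} in
/-- `j` is the join of `φ` and `ψ` in `(PPU(b)⁻, ⊑)`. -/
def IsJoinD (b : LinearMap.BilinForm k V) (φ ψ j : (ℤ →₀ V) ≃ₗ[k] (ℤ →₀ V)) : Prop :=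
  PPUneg k V b j ∧ DvdLe b φ j ∧ DvdLe b ψ j ∧
    ∀ χ, PPUneg k V b χ → DvdLe b φ χ → DvdLe b ψ χ → DvdLe b j χ

variable {k V} in
/-- `m` is the meet of `φ` and `ψ` in `(PPU(b)⁻, ⊑)`. -/
def IsMeetD (b : LinearMap.BilinForm k V) (φ ψ m : (ℤ →₀ V) ≃ₗ[k] (ℤ →₀ V)) : Prop :=
  PPUneg k V b m ∧ DvdLe b m φ ∧ DvdLe b m ψ ∧
    ∀ χ, PPUneg k V b χ → DvdLe b χ φ → DvdLe b χ ψ → DvdLe b χ m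

/-! The map `φ_*` induced by `φ` on `V⊕` satisfies `Ω(χ φ) = φ_*⁻¹(Ω(χ))`, so `φ` right-divides
`ψ` exactly when `ψ φ⁻¹`, which is pure paraunitary in any case, preserves `V[t⁻¹]`, and this says
`Ω(φ) ≤ Ω(ψ)`. For injectivity, the coefficients of a paraunitary `χ` and of `χ⁻¹` are mutually
adjoint, so if both are in `PPU(b)⁻` then anisotropy leaves only the constant coefficient, which
is the identity by purity. For surjectivity, `t⁻¹` acts locally nilpotently on `V⊕`, hence a nonzero
finitely generated submodule `U` is finite-dimensional and contains some `t x ≠ 0`. The elementary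
element `f = 1 - p + t⁻¹ p`, with `p` the orthogonal projection onto the line of `x`, has
`Ω(f) = k · t x`, so `f_*(U)` has smaller dimension; if `f_*(U) = Ω(φ)` then `U = Ω(φ f)`. Finally,
finitely generated submodules are closed under `⊔` and `⊓`, so the modular law passes from the
lattice of all submodules to `PPU(b)⁻`. -/

section LocallyNilpotent

variable {R M : Type*} [Semiring R] [AddCommMonoid M] [Module R M] {f : Module.End R M}

lemma finite_orbit_of_pow_apply_eq_zero {x : M} {N : ℕ} (h : (f ^ N) x = 0) :
    {y | ∃ n : ℕ, y = (f ^ n) x}.Finite := by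
  refine (((Set.finite_Iio N).image fun n => (f ^ n) x).insert 0).subset ?_
  rintro _ ⟨n, rfl⟩
  rcases lt_or_ge n N with hn | hn
  · exact .inr ⟨n, hn, rfl⟩
  · exact .inl (Module.End.pow_map_zero_of_le hn h)

lemma exists_ne_zero_apply_eq_zero (hf : ∀ x, ∃ n : ℕ, (f ^ n) x = 0) {U : Submodule R M}
    (hU : U ∈ f.invtSubmodule) (hU₀ : U ≠ ⊥) : ∃ u ∈ U, u ≠ 0 ∧ f u = 0 := by
  classical
  obtain ⟨x, hx, hx₀⟩ := U.exists_mem_ne_zero_of_ne_bot hU₀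
  obtain ⟨n, hn⟩ : ∃ n, Nat.find (hf x) = n + 1 :=
    Nat.exists_eq_succ_of_ne_zero fun h => hx₀ (by simpa [h] using Nat.find_spec (hf x))
  refine ⟨(f ^ n) x, ?_, Nat.find_min (hf x) (by lia), ?_⟩
  · rw [Module.End.pow_apply]
    exact Set.MapsTo.iterate hU n hx
  · rw [← Module.End.mul_apply, ← pow_succ', ← hn]
    exact Nat.find_spec (hf x)

lemma span_orbits_mem_invtSubmodule (S : Set M) :
    Submodule.span R {y | ∃ s ∈ S, ∃ n : ℕ, y = (f ^ n) s} ∈ f.invtSubmodule := by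
  rw [Module.End.mem_invtSubmodule, Submodule.span_le]
  rintro _ ⟨s, hs, n, rfl⟩
  refine Submodule.subset_span ⟨s, hs, n + 1, ?_⟩
  rw [pow_succ', Module.End.mul_apply]

lemma span_orbits_span {U : Submodule R M} (hU : U ∈ f.invtSubmodule) {S : Set M}
    (hS : Submodule.span R S = U) :
    Submodule.span R {y | ∃ s ∈ S, ∃ n : ℕ, y = (f ^ n) s} = U := by
  apply le_antisymm
  · rw [Submodule.span_le]
    rintro _ ⟨s, hs, n, rfl⟩
    rw [Module.End.pow_apply]
    exact Set.MapsTo.iterate hU n (hS ▸ Submodule.subset_span hs)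
  · rw [← hS]
    exact Submodule.span_mono fun s hs => ⟨s, hs, 0, rfl⟩

end LocallyNilpotent

section Paraunitary

variable {k V}

local notation "V⊕" => (ℤ →₀ V) ⧸ Vneg k V

variable {b : LinearMap.BilinForm k V} {φ ψ χ : (ℤ →₀ V) ≃ₗ[k] (ℤ →₀ V)}

lemma shift_apply (n : ℤ) (v : ℤ →₀ V) (i : ℤ) : shift k V n v i = v (i - n) := by
  simp [shift, sub_eq_add_neg]

lemma shift_single (n i : ℤ) (x : V) : shift k V n (single i x) = single (i + n) x := by
  simp [shift]

lemma shift_zero : shift k V 0 = 1 := by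
  ext v i
  simp [shift_apply]

lemma shift_add (m n : ℤ) : shift k V (m + n) = shift k V m * shift k V n := by
  ext v i
  simp [shift_apply, sub_sub]

lemma map_shift_of_map_shift_one {α : (ℤ →₀ V) → (ℤ →₀ V)}
    (hα : ∀ v, α (shift k V 1 v) = shift k V 1 (α v)) (n : ℤ) (v : ℤ →₀ V) :
    α (shift k V n v) = shift k V n (α v) := by
  induction n using Int.induction_on generalizing v with
  | zero => simp [shift_zero]
  | succ n ih => rw [shift_add, LinearEquiv.mul_apply, LinearEquiv.mul_apply, ih, hα]
  | pred n ih =>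
    apply (shift k V 1).injective
    rw [← hα, ← LinearEquiv.mul_apply, ← LinearEquiv.mul_apply, ← shift_add]
    convert ih v using 3 <;> ring_nf

lemma map_single_eq_shift {α : (ℤ →₀ V) → (ℤ →₀ V)}
    (hα : ∀ v, α (shift k V 1 v) = shift k V 1 (α v)) (i : ℤ) (x : V) :
    α (single i x) = shift k V i (α (single 0 x)) := by
  rw [← map_shift_of_map_shift_one hα, shift_single, zero_add]

variable (k V) in
/-- The specialization `v ↦ ∑ᵢ vᵢ` of `V[t,t⁻¹]` at `t = 1`, through which `eps` factors. -/
noncomputable def evalOne : (ℤ →₀ V) →ₗ[k] V :=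
  Finsupp.lsum k fun _ : ℤ => (LinearMap.id : V →ₗ[k] V)

lemma evalOne_single (i : ℤ) (x : V) : evalOne k V (single i x) = x := by
  simp [evalOne]

lemma evalOne_shift (n : ℤ) (v : ℤ →₀ V) : evalOne k V (shift k V n v) = evalOne k V v := by
  induction v using Finsupp.induction_linear with
  | zero => simp
  | add v w hv hw => rw [map_add, map_add, map_add, hv, hw]
  | single i x => rw [shift_single, evalOne_single, evalOne_single]

lemma single_zero_mem_Vneg (x : V) : single 0 x ∈ Vneg k V :=
  fun _ hi => single_eq_of_ne hi.ne'

lemma shift_neg_mem_Vneg {v : ℤ →₀ V} (hv : v ∈ Vneg k V) (n : ℕ) :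
    shift k V (-n) v ∈ Vneg k V := by
  intro i hi
  rw [shift_apply]
  exact hv _ (by lia)

lemma Vneg_eq_span {T : Set V} (hT : Submodule.span k T = ⊤) :
    Vneg k V = Submodule.span k {v | ∃ x ∈ T, ∃ n : ℕ, v = shift k V (-n) (single 0 x)} := by
  apply le_antisymm
  · intro v hv
    rw [← v.sum_single]
    refine Submodule.sum_mem _ fun i hi => ?_
    obtain ⟨n, rfl⟩ : ∃ n : ℕ, i = -n :=
      Int.exists_eq_neg_ofNat (not_lt.1 fun h => mem_support_iff.1 hi (hv i h))
    have hle : Submodule.span k T ≤ (Submodule.span k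
        {v | ∃ x ∈ T, ∃ n : ℕ, v = shift k V (-n) (single 0 x)}).comap (lsingle (-n : ℤ)) :=
      Submodule.span_le.2 fun x hx =>
        Submodule.subset_span ⟨x, hx, n, by rw [shift_single, zero_add]; rfl⟩
    exact hle (hT ▸ Submodule.mem_top)
  · rw [Submodule.span_le]
    rintro _ ⟨x, -, n, rfl⟩
    exact shift_neg_mem_Vneg (single_zero_mem_Vneg x) n

lemma mkQ_eq_mkQ_iff {v w : ℤ →₀ V} :
    (Vneg k V).mkQ v = (Vneg k V).mkQ w ↔ ∀ i : ℤ, 0 < i → v i = w i := by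
  simp only [Submodule.mkQ_apply, Submodule.Quotient.eq, ← sub_eq_zero (a := v _)]
  rfl

lemma shiftQ_pow_mkQ (n : ℕ) (v : ℤ →₀ V) :
    (shiftQ k V ^ n) ((Vneg k V).mkQ v) = (Vneg k V).mkQ (shift k V (-n) v) := by
  induction n with
  | zero => simp [shift_zero]
  | succ n ih =>
    rw [pow_succ', Module.End.mul_apply, ih, Nat.cast_succ, neg_add_rev, shift_add]
    rfl

lemma exists_shiftQ_pow_eq_zero (u : V⊕) : ∃ n : ℕ, (shiftQ k V ^ n) u = 0 := by
  obtain ⟨v, rfl⟩ := (Vneg k V).mkQ_surjective u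
  obtain ⟨N, hN⟩ := v.support.bddAbove
  refine ⟨N.toNat, ?_⟩
  rw [shiftQ_pow_mkQ, ← map_zero (Vneg k V).mkQ, mkQ_eq_mkQ_iff]
  intro i hi
  rw [shift_apply]
  refine notMem_support_iff.1 fun h => ?_
  have := hN h
  lia

lemma eq_mkQ_single_one_of_shiftQ_eq_zero {u : V⊕} (hu : shiftQ k V u = 0) :
    ∃ x : V, u = (Vneg k V).mkQ (single 1 x) := by
  obtain ⟨v, rfl⟩ := (Vneg k V).mkQ_surjective u
  rw [← pow_one (shiftQ k V), shiftQ_pow_mkQ, ← map_zero (Vneg k V).mkQ, mkQ_eq_mkQ_iff] at hu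
  refine ⟨v 1, mkQ_eq_mkQ_iff.2 fun i hi => ?_⟩
  rcases eq_or_ne i 1 with rfl | h1
  · rw [single_eq_same]
  · rw [single_eq_of_ne h1]
    simpa [shift_apply] using hu (i - 1) (by lia)

lemma fgSubQ_iff {U : Submodule k V⊕} :
    FGSubQ k V U ↔ U ∈ Module.End.invtSubmodule (shiftQ k V) ∧ FiniteDimensional k U := by
  constructor
  · rintro ⟨S, rfl⟩
    refine ⟨span_orbits_mem_invtSubmodule (S : Set V⊕), .span_of_finite k ?_⟩
    refine (S.finite_toSet.biUnion fun s _ =>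
      finite_orbit_of_pow_apply_eq_zero (exists_shiftQ_pow_eq_zero s).choose_spec).subset ?_
    rintro _ ⟨s, hs, n, rfl⟩
    exact Set.mem_biUnion hs ⟨n, rfl⟩
  · rintro ⟨hU, hfin⟩
    obtain ⟨S, hS⟩ := Module.Finite.iff_fg.1 hfin
    exact ⟨S, (span_orbits_span hU hS).symm⟩

lemma FGSubQ.sup {U W : Submodule k V⊕} (hU : FGSubQ k V U) (hW : FGSubQ k V W) :
    FGSubQ k V (U ⊔ W) := by
  rw [fgSubQ_iff] at *
  obtain ⟨hU, _⟩ := hU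
  obtain ⟨hW, _⟩ := hW
  exact ⟨Sublattice.sup_mem hU hW, inferInstance⟩

lemma FGSubQ.inf {U W : Submodule k V⊕} (hU : FGSubQ k V U) (hW : FGSubQ k V W) :
    FGSubQ k V (U ⊓ W) := by
  rw [fgSubQ_iff] at *
  obtain ⟨hU, _⟩ := hU
  exact ⟨Sublattice.inf_mem hU hW.1, inferInstance⟩

lemma IsPU.mul (hφ : IsPU k V b φ) (hψ : IsPU k V b ψ) : IsPU k V b (φ * ψ) :=
  ⟨fun v => by simp only [LinearEquiv.mul_apply, hφ.1, hψ.1],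
    fun n v w => by simp only [LinearEquiv.mul_apply, hφ.2, hψ.2]⟩

lemma IsPU.inv (hφ : IsPU k V b φ) : IsPU k V b φ⁻¹ :=
  ⟨fun v => φ.injective <| by simp only [hφ.1, LinearEquiv.coe_inv, LinearEquiv.apply_symm_apply],
    fun n v w => by
      rw [← hφ.2]
      simp only [LinearEquiv.coe_inv, LinearEquiv.apply_symm_apply]⟩

lemma isPPU_iff :
    IsPPU k V b φ ↔ IsPU k V b φ ∧ ∀ v, evalOne k V (φ v) = evalOne k V v := by
  refine and_congr_right fun hφ => ⟨fun h v => ?_, fun h => ?_⟩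
  · induction v using Finsupp.induction_linear with
    | zero => simp
    | add v w hv hw => rw [map_add, map_add, map_add, hv, hw]
    | single i x =>
      rw [map_single_eq_shift hφ.1, evalOne_shift, evalOne_single]
      exact LinearMap.congr_fun h x
  · ext x
    exact (h _).trans (evalOne_single 0 x)

lemma IsPPU.mul (hφ : IsPPU k V b φ) (hψ : IsPPU k V b ψ) : IsPPU k V b (φ * ψ) := by
  rw [isPPU_iff] at *
  exact ⟨hφ.1.mul hψ.1, fun v => by rw [LinearEquiv.mul_apply, hφ.2, hψ.2]⟩

lemma IsPPU.inv (hφ : IsPPU k V b φ) : IsPPU k V b φ⁻¹ := by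
  rw [isPPU_iff] at *
  refine ⟨hφ.1.inv, fun v => ?_⟩
  rw [← hφ.2, LinearEquiv.coe_inv, LinearEquiv.apply_symm_apply]

lemma ppuNeg_iff :
    PPUneg k V b φ ↔ IsPPU k V b φ ∧ Vneg k V ≤ (Vneg k V).comap (φ : (ℤ →₀ V) →ₗ[k] (ℤ →₀ V)) := by
  refine and_congr_right fun hφ => ⟨fun h => ?_, fun h x => h (single_zero_mem_Vneg x)⟩
  rw [Vneg_eq_span Submodule.span_univ, Submodule.span_le, ← Vneg_eq_span Submodule.span_univ]
  rintro _ ⟨x, -, n, rfl⟩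
  change φ _ ∈ Vneg k V
  rw [map_shift_of_map_shift_one hφ.1.1]
  exact shift_neg_mem_Vneg (h x) n

lemma PPUneg.one : PPUneg k V b 1 :=
  ppuNeg_iff.2 ⟨isPPU_iff.2 ⟨⟨fun _ => rfl, fun _ _ _ => rfl⟩, fun _ => rfl⟩, le_rfl⟩

lemma PPUneg.mul (hφ : PPUneg k V b φ) (hψ : PPUneg k V b ψ) : PPUneg k V b (φ * ψ) :=
  ppuNeg_iff.2 ⟨hφ.1.mul hψ.1,
    fun _ hv => (ppuNeg_iff.1 hφ).2 ((ppuNeg_iff.1 hψ).2 hv)⟩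

/-- The endomorphism `φ_*` of `V⊕ = V[t,t⁻¹]/V[t⁻¹]` induced by `φ ∈ PPU(b)⁻`. -/
noncomputable def PPUneg.mapQ (hφ : PPUneg k V b φ) : Module.End k V⊕ :=
  Submodule.mapQ (Vneg k V) (Vneg k V) φ (ppuNeg_iff.1 hφ).2

lemma PPUneg.mapQ_mkQ (hφ : PPUneg k V b φ) (v : ℤ →₀ V) :
    hφ.mapQ ((Vneg k V).mkQ v) = (Vneg k V).mkQ (φ v) := rfl

lemma PPUneg.omegaSub_eq_ker (hφ : PPUneg k V b φ) :
    OmegaSub k V φ = LinearMap.ker hφ.mapQ :=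
  (Submodule.ker_mapQ _ _ _ _).symm

lemma PPUneg.omegaSub_mul (hχ : PPUneg k V b χ) (hφ : PPUneg k V b φ) :
    OmegaSub k V (χ * φ) = (OmegaSub k V χ).comap hφ.mapQ := by
  rw [(hχ.mul hφ).omegaSub_eq_ker, hχ.omegaSub_eq_ker, ← LinearMap.ker_comp]
  congr 1
  ext v
  rfl

lemma PPUneg.mkQ_mem_omegaSub_iff (hφ : PPUneg k V b φ) {v : ℤ →₀ V} :
    (Vneg k V).mkQ v ∈ OmegaSub k V φ ↔ φ v ∈ Vneg k V := by
  rw [hφ.omegaSub_eq_ker, LinearMap.mem_ker, hφ.mapQ_mkQ]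
  exact Submodule.Quotient.mk_eq_zero _

lemma PPUneg.mapQ_shiftQ (hφ : PPUneg k V b φ) (u : V⊕) :
    hφ.mapQ (shiftQ k V u) = shiftQ k V (hφ.mapQ u) := by
  obtain ⟨v, rfl⟩ := (Vneg k V).mkQ_surjective u
  exact congrArg (Vneg k V).mkQ (map_shift_of_map_shift_one hφ.1.1.1 (-1) v)

lemma omegaSub_one : OmegaSub k V (1 : (ℤ →₀ V) ≃ₗ[k] (ℤ →₀ V)) = ⊥ :=
  Submodule.mkQ_map_self (Vneg k V)

lemma omegaSub_eq_map_symm :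
    OmegaSub k V φ = (Vneg k V).map ((Vneg k V).mkQ ∘ₗ (φ.symm : (ℤ →₀ V) →ₗ[k] (ℤ →₀ V))) := by
  rw [OmegaSub, Submodule.comap_equiv_eq_map_symm, Submodule.map_comp]

/- `V[t⁻¹]` is generated over `k[t⁻¹]` by `V`, so `Ω(φ)`, the image of `φ⁻¹(V[t⁻¹])`, is generated
by the image of `φ⁻¹(V)`. -/
lemma IsPU.fgSubQ_omegaSub [FiniteDimensional k V] (hφ : IsPU k V b φ) :
    FGSubQ k V (OmegaSub k V φ) := by
  classical
  obtain ⟨T, hT⟩ := (Module.Finite.fg_top : (⊤ : Submodule k V).FG)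
  have hmap (x : V) (n : ℕ) : (Vneg k V).mkQ (φ.symm (shift k V (-n) (single 0 x))) =
      (shiftQ k V ^ n) ((Vneg k V).mkQ (φ.symm (single 0 x))) := by
    rw [shiftQ_pow_mkQ, ← LinearEquiv.coe_inv, map_shift_of_map_shift_one hφ.inv.1]
  refine ⟨T.image fun x => (Vneg k V).mkQ (φ.symm (single 0 x)), ?_⟩
  rw [omegaSub_eq_map_symm, congrArg (Submodule.map _) (Vneg_eq_span hT), Submodule.map_span]
  congr 1
  ext u
  constructor
  · rintro ⟨_, ⟨x, hx, n, rfl⟩, rfl⟩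
    exact ⟨_, Finset.mem_image_of_mem _ hx, n, hmap x n⟩
  · rintro ⟨_, hs, n, rfl⟩
    obtain ⟨x, hx, rfl⟩ := Finset.mem_image.1 hs
    exact ⟨_, ⟨x, hx, n, rfl⟩, hmap x n⟩

lemma ppuNeg_mul_inv_iff (hφ : PPUneg k V b φ) (hψ : PPUneg k V b ψ) :
    PPUneg k V b (ψ * φ⁻¹) ↔ OmegaSub k V φ ≤ OmegaSub k V ψ := by
  constructor
  · intro h
    calc OmegaSub k V φ = LinearMap.ker hφ.mapQ := hφ.omegaSub_eq_ker
      _ ≤ (OmegaSub k V (ψ * φ⁻¹)).comap hφ.mapQ := Submodule.comap_mono bot_le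
      _ = OmegaSub k V ψ := by rw [← h.omegaSub_mul hφ, inv_mul_cancel_right]
  · refine fun h => ppuNeg_iff.2 ⟨hψ.1.mul hφ.1.inv, fun v hv => ?_⟩
    have hmem : (Vneg k V).mkQ (φ.symm v) ∈ OmegaSub k V φ := by
      rwa [hφ.mkQ_mem_omegaSub_iff, LinearEquiv.apply_symm_apply]
    exact hψ.mkQ_mem_omegaSub_iff.1 (h hmem)

lemma dvdLe_iff (hφ : PPUneg k V b φ) (hψ : PPUneg k V b ψ) :
    DvdLe b φ ψ ↔ OmegaSub k V φ ≤ OmegaSub k V ψ := by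
  rw [← ppuNeg_mul_inv_iff hφ hψ]
  refine ⟨?_, fun h => ⟨ψ * φ⁻¹, h, by rw [inv_mul_cancel_right]⟩⟩
  rintro ⟨χ, hχ, rfl⟩
  rwa [mul_inv_cancel_right]

lemma Btilde_single_right (n i : ℤ) (v : ℤ →₀ V) (y : V) :
    Btilde k V b n v (single i y) = b (v (i - n)) y := by
  simp [Btilde]

lemma Btilde_single_zero_left (n : ℤ) (x : V) (w : ℤ →₀ V) :
    Btilde k V b n (single 0 x) w = b x (w n) := by
  rw [Btilde, Finsupp.sum, Finset.sum_eq_single n]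
  · simp
  · intro i _ hi
    rw [single_eq_of_ne (sub_ne_zero.2 hi), map_zero, LinearMap.zero_apply]
  · intro h
    rw [notMem_support_iff.1 h, map_zero]

lemma Btilde_add_right (n : ℤ) (v w w' : ℤ →₀ V) :
    Btilde k V b n v (w + w') = Btilde k V b n v w + Btilde k V b n v w' :=
  Finsupp.sum_add_index' (fun _ => map_zero _) fun _ => map_add _

lemma IsPU.bilin_coeff_inv (hφ : IsPU k V b φ) (x y : V) (i : ℤ) :
    b (φ (single 0 x) i) y = b x (φ⁻¹ (single 0 y) (-i)) := by
  have h := hφ.2 (-i) (single 0 x) (φ⁻¹ (single 0 y))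
  rwa [LinearEquiv.coe_inv, LinearEquiv.apply_symm_apply, Btilde_single_right,
    Btilde_single_zero_left, zero_sub, neg_neg] at h

lemma PPUneg.eq_one_of_inv (haniso : ∀ v : V, b v v = 0 → v = 0) (hχ : PPUneg k V b χ)
    (hχ' : PPUneg k V b χ⁻¹) : χ = 1 := by
  have hcoeff (x : V) (i : ℤ) (hi : i ≠ 0) : χ (single 0 x) i = 0 := by
    rcases hi.lt_or_gt with hi | hi
    · apply haniso
      rw [hχ.1.1.bilin_coeff_inv, hχ'.2 _ _ (neg_pos.2 hi), map_zero]
    · exact hχ.2 x i hi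
  have hconst (x : V) : χ (single 0 x) = single 0 x := by
    obtain ⟨y, hy⟩ : ∃ y, χ (single 0 x) = single 0 y :=
      ⟨χ (single 0 x) 0, Finsupp.ext fun i => by
        rcases eq_or_ne i 0 with rfl | hi
        · rw [single_eq_same]
        · rw [hcoeff x i hi, single_eq_of_ne hi]⟩
    have heval := (isPPU_iff.1 hχ.1).2 (single 0 x)
    rw [hy, evalOne_single, evalOne_single] at heval
    rw [hy, heval]
  ext v : 1
  induction v using Finsupp.induction_linear with
  | zero => simp
  | add v w hv hw => rw [map_add, map_add, hv, hw]
  | single i x =>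
    rw [map_single_eq_shift hχ.1.1.1, hconst, shift_single, zero_add]
    rfl

lemma PPUneg.eq_of_omegaSub_eq (haniso : ∀ v : V, b v v = 0 → v = 0) (hφ : PPUneg k V b φ)
    (hψ : PPUneg k V b ψ) (h : OmegaSub k V φ = OmegaSub k V ψ) : φ = ψ := by
  refine mul_inv_eq_one.1 (PPUneg.eq_one_of_inv haniso ((ppuNeg_mul_inv_iff hψ hφ).2 h.ge) ?_)
  rw [mul_inv_rev, inv_inv]
  exact (ppuNeg_mul_inv_iff hφ hψ).2 h.le

/-- The endomorphism `1 - p + tⁿ p` of `V[t,t⁻¹]`, for an endomorphism `p` of `V`; it is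
invertible when `p` is a projection. -/
noncomputable def shiftAlong (p : Module.End k V) (n : ℤ) : Module.End k (ℤ →₀ V) :=
  1 - mapRange.linearMap p + (shift k V n).toLinearMap ∘ₗ mapRange.linearMap p

variable {p : Module.End k V}

lemma shiftAlong_apply (p : Module.End k V) (n : ℤ) (v : ℤ →₀ V) (i : ℤ) :
    shiftAlong p n v i = v i - p (v i) + p (v (i - n)) := by
  simp [shiftAlong, shift_apply]

lemma shiftAlong_single (p : Module.End k V) (n i : ℤ) (x : V) :
    shiftAlong p n (single i x) = single i (x - p x) + single (i + n) (p x) := by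
  simp [shiftAlong, shift_single, single_sub]

lemma shiftAlong_comp_shiftAlong_neg (hp : IsIdempotentElem p) (n : ℤ) :
    shiftAlong p n ∘ₗ shiftAlong p (-n) = LinearMap.id := by
  have hpp (x : V) : p (p x) = p x := LinearMap.congr_fun hp x
  refine LinearMap.ext fun v => Finsupp.ext fun i => ?_
  simp [shiftAlong_apply, hpp]

/-- The automorphism `1 - p + t⁻¹ p` of `V[t,t⁻¹]` attached to a projection `p`: an elementary
paraunitary transformation if `p` is self-adjoint. -/
noncomputable def elementary (hp : IsIdempotentElem p) : (ℤ →₀ V) ≃ₗ[k] (ℤ →₀ V) :=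
  .ofLinearMap (shiftAlong p (-1)) (shiftAlong p 1)
    (by simpa using shiftAlong_comp_shiftAlong_neg hp (-1)) (shiftAlong_comp_shiftAlong_neg hp 1)

lemma Btilde_shiftAlong_left (hs : b.IsSelfAdjoint p) (m n : ℤ) (v w : ℤ →₀ V) :
    Btilde k V b n (shiftAlong p m v) w = Btilde k V b n v (shiftAlong p (-m) w) := by
  induction w using Finsupp.induction_linear with
  | zero => simp [Btilde]
  | add w w' hw hw' => rw [map_add, Btilde_add_right, Btilde_add_right, hw, hw']
  | single i y =>
    have hs' (x : V) : b (p x) y = b x (p y) := hs x y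
    simp only [shiftAlong_single, Btilde_add_right, Btilde_single_right, shiftAlong_apply,
      map_add, map_sub, LinearMap.add_apply, LinearMap.sub_apply, hs']
    congr 4
    ring

lemma ppuNeg_elementary (hp : IsIdempotentElem p) (hs : b.IsSelfAdjoint p) :
    PPUneg k V b (elementary hp) := by
  refine ppuNeg_iff.2
    ⟨isPPU_iff.2 ⟨⟨fun v => ?_, fun n v w => ?_⟩, fun v => ?_⟩, fun v hv i hi => ?_⟩
  · ext i
    change shiftAlong p (-1) _ i = shift k V 1 (shiftAlong p (-1) v) i
    simp only [shift_apply, shiftAlong_apply, sub_right_comm]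
  · change Btilde k V b n (shiftAlong p (-1) v) (elementary hp w) = _
    rw [Btilde_shiftAlong_left hs, neg_neg]
    exact congrArg _ ((elementary hp).symm_apply_apply w)
  · change evalOne k V (v - mapRange.linearMap p v + shift k V (-1) (mapRange.linearMap p v)) = _
    rw [map_add, evalOne_shift, ← map_add, sub_add_cancel]
  · change shiftAlong p (-1) v i = 0
    rw [shiftAlong_apply, hv i hi, hv (i - -1) (by lia), map_zero, sub_zero, add_zero]

lemma omegaSub_elementary (hp : IsIdempotentElem p) :
    OmegaSub k V (elementary hp) =
      (LinearMap.range p).map ((Vneg k V).mkQ ∘ₗ Finsupp.lsingle 1) := by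
  have hsymm (w : ℤ →₀ V) (hw : w ∈ Vneg k V) :
      (Vneg k V).mkQ ((elementary hp).symm w) = (Vneg k V).mkQ (single 1 (p (w 0))) := by
    refine mkQ_eq_mkQ_iff.2 fun i hi => ?_
    change shiftAlong p 1 w i = _
    rw [shiftAlong_apply, hw i hi, map_zero, sub_zero, zero_add]
    rcases eq_or_ne i 1 with rfl | h1
    · rw [single_eq_same, sub_self]
    · rw [single_eq_of_ne h1, hw (i - 1) (by lia), map_zero]
  rw [omegaSub_eq_map_symm]
  apply le_antisymm
  · rintro _ ⟨w, hw, rfl⟩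
    exact ⟨p (w 0), ⟨w 0, rfl⟩, (hsymm w hw).symm⟩
  · rintro _ ⟨_, ⟨x, rfl⟩, rfl⟩
    refine ⟨single 0 x, single_zero_mem_Vneg x, ?_⟩
    exact (hsymm _ (single_zero_mem_Vneg x)).trans (by rw [single_eq_same]; rfl)

/-- The `b`-orthogonal projection onto the line spanned by `x`, for `b x x ≠ 0` (if `b x x = 0`, it
is `0`). -/
noncomputable def lineProj (b : LinearMap.BilinForm k V) (x : V) : Module.End k V :=
  ((b x x)⁻¹ • b x).smulRight x

lemma lineProj_apply (x y : V) : lineProj b x y = ((b x x)⁻¹ * b x y) • x := rfl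

lemma lineProj_self {x : V} (hx : b x x ≠ 0) : lineProj b x x = x := by
  rw [lineProj_apply, inv_mul_cancel₀ hx, one_smul]

lemma isIdempotentElem_lineProj {x : V} (hx : b x x ≠ 0) : IsIdempotentElem (lineProj b x) := by
  ext y
  rw [Module.End.mul_apply, lineProj_apply x y, map_smul, lineProj_self hx]

lemma isSelfAdjoint_lineProj (hsymm : ∀ v w : V, b v w = b w v) (x : V) :
    b.IsSelfAdjoint (lineProj b x) := by
  intro y z
  simp only [lineProj_apply, map_smul, LinearMap.smul_apply, smul_eq_mul, hsymm y x]
  ring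

lemma range_lineProj {x : V} (hx : b x x ≠ 0) :
    LinearMap.range (lineProj b x) = Submodule.span k {x} :=
  LinearMap.range_smulRight_apply (fun h => hx <| by simpa [hx] using LinearMap.congr_fun h x) x

lemma exists_mkQ_single_one_mem {U : Submodule k V⊕}
    (hU : U ∈ Module.End.invtSubmodule (shiftQ k V)) (hU₀ : U ≠ ⊥) :
    ∃ x : V, (Vneg k V).mkQ (single 1 x) ∈ U ∧ (Vneg k V).mkQ (single 1 x) ≠ 0 := by
  obtain ⟨u, hu, hu₀, hu'⟩ := exists_ne_zero_apply_eq_zero exists_shiftQ_pow_eq_zero hU hU₀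
  obtain ⟨x, rfl⟩ := eq_mkQ_single_one_of_shiftQ_eq_zero hu'
  exact ⟨x, hu, hu₀⟩

lemma exists_ppuNeg_omegaSub_le (hsymm : ∀ v w : V, b v w = b w v)
    (haniso : ∀ v : V, b v v = 0 → v = 0) {U : Submodule k V⊕}
    (hU : U ∈ Module.End.invtSubmodule (shiftQ k V)) (hU₀ : U ≠ ⊥) :
    ∃ φ, PPUneg k V b φ ∧ OmegaSub k V φ ≤ U ∧ OmegaSub k V φ ≠ ⊥ := by
  obtain ⟨x, hxU, hx₀⟩ := exists_mkQ_single_one_mem hU hU₀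
  have hx : b x x ≠ 0 := fun h => hx₀ (by rw [haniso x h, single_zero, map_zero])
  refine ⟨_, ppuNeg_elementary (isIdempotentElem_lineProj hx) (isSelfAdjoint_lineProj hsymm x), ?_⟩
  rw [omegaSub_elementary, range_lineProj hx, Submodule.map_span, Set.image_singleton]
  exact ⟨(Submodule.span_singleton_le_iff_mem _ _).2 hxU, mt Submodule.span_singleton_eq_bot.1 hx₀⟩

lemma exists_ppuNeg_omegaSub_eq (hsymm : ∀ v w : V, b v w = b w v)
    (haniso : ∀ v : V, b v v = 0 → v = 0) {U : Submodule k V⊕} (hU : FGSubQ k V U) :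
    ∃ φ, PPUneg k V b φ ∧ OmegaSub k V φ = U := by
  obtain ⟨hinv, hfin⟩ := fgSubQ_iff.1 hU
  clear hU
  induction h : Module.finrank k U using Nat.strong_induction_on generalizing U with
  | _ d ih =>
  subst h
  rcases eq_or_ne U ⊥ with rfl | hU₀
  · exact ⟨1, .one, omegaSub_one⟩
  obtain ⟨f, hf, hle, hne⟩ := exists_ppuNeg_omegaSub_le hsymm haniso hinv hU₀
  rw [hf.omegaSub_eq_ker] at hle hne
  have hlt : Module.finrank k (U.map hf.mapQ) < Module.finrank k U := by
    by_contra! hge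
    exact hne ((Submodule.disjoint_ker_of_finrank_le _ hge).eq_bot_of_ge hle)
  have hinv' : U.map hf.mapQ ∈ Module.End.invtSubmodule (shiftQ k V) := by
    rintro _ ⟨u, hu, rfl⟩
    exact ⟨shiftQ k V u, hinv hu, hf.mapQ_shiftQ u⟩
  obtain ⟨φ, hφ, hφU⟩ := ih _ hlt hinv' inferInstance rfl
  exact ⟨φ * f, hφ.mul hf, by rw [hφ.omegaSub_mul hf, hφU, Submodule.comap_map_eq_self hle]⟩

section Lattice

variable [FiniteDimensional k V] {j m : (ℤ →₀ V) ≃ₗ[k] (ℤ →₀ V)}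

lemma isJoinD_iff (hsymm : ∀ v w : V, b v w = b w v) (haniso : ∀ v : V, b v v = 0 → v = 0)
    (hφ : PPUneg k V b φ) (hψ : PPUneg k V b ψ) (hj : PPUneg k V b j) :
    IsJoinD b φ ψ j ↔ OmegaSub k V j = OmegaSub k V φ ⊔ OmegaSub k V ψ := by
  constructor
  · rintro ⟨-, hφj, hψj, hmin⟩
    obtain ⟨χ, hχ, hχΩ⟩ := exists_ppuNeg_omegaSub_eq hsymm haniso
      (hφ.1.1.fgSubQ_omegaSub.sup hψ.1.1.fgSubQ_omegaSub)
    refine le_antisymm ?_ (sup_le ((dvdLe_iff hφ hj).1 hφj) ((dvdLe_iff hψ hj).1 hψj))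
    rw [← hχΩ, ← dvdLe_iff hj hχ]
    exact hmin χ hχ ((dvdLe_iff hφ hχ).2 (hχΩ ▸ le_sup_left))
      ((dvdLe_iff hψ hχ).2 (hχΩ ▸ le_sup_right))
  · refine fun h => ⟨hj, (dvdLe_iff hφ hj).2 (h ▸ le_sup_left),
      (dvdLe_iff hψ hj).2 (h ▸ le_sup_right), fun χ hχ hφχ hψχ => (dvdLe_iff hj hχ).2 ?_⟩
    exact h ▸ sup_le ((dvdLe_iff hφ hχ).1 hφχ) ((dvdLe_iff hψ hχ).1 hψχ)

lemma isMeetD_iff (hsymm : ∀ v w : V, b v w = b w v) (haniso : ∀ v : V, b v v = 0 → v = 0)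
    (hφ : PPUneg k V b φ) (hψ : PPUneg k V b ψ) (hm : PPUneg k V b m) :
    IsMeetD b φ ψ m ↔ OmegaSub k V m = OmegaSub k V φ ⊓ OmegaSub k V ψ := by
  constructor
  · rintro ⟨-, hmφ, hmψ, hmax⟩
    obtain ⟨χ, hχ, hχΩ⟩ := exists_ppuNeg_omegaSub_eq hsymm haniso
      (hφ.1.1.fgSubQ_omegaSub.inf hψ.1.1.fgSubQ_omegaSub)
    refine le_antisymm (le_inf ((dvdLe_iff hm hφ).1 hmφ) ((dvdLe_iff hm hψ).1 hmψ)) ?_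
    rw [← hχΩ, ← dvdLe_iff hχ hm]
    exact hmax χ hχ ((dvdLe_iff hχ hφ).2 (hχΩ ▸ inf_le_left))
      ((dvdLe_iff hχ hψ).2 (hχΩ ▸ inf_le_right))
  · refine fun h => ⟨hm, (dvdLe_iff hm hφ).2 (h ▸ inf_le_left),
      (dvdLe_iff hm hψ).2 (h ▸ inf_le_right), fun χ hχ hχφ hχψ => (dvdLe_iff hχ hm).2 ?_⟩
    exact h ▸ le_inf ((dvdLe_iff hχ hφ).1 hχφ) ((dvdLe_iff hχ hψ).1 hχψ)

end Lattice

end Paraunitary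

/-- `Ω` is an isomorphism of posets from `(PPU(b)⁻, ⊑)` (the
right-divisibility order) onto `Sub(V⊕)` (finitely generated `k[t⁻¹]`-submodules,
ordered by inclusion); in particular `(PPU(b)⁻, ⊑)` is a modular lattice. -/
theorem stmt15 [FiniteDimensional k V] (b : LinearMap.BilinForm k V)
    (hsymm : ∀ v w : V, b v w = b w v)
    (haniso : ∀ v : V, b v v = 0 → v = 0) :
    (∀ φ, PPUneg k V b φ → FGSubQ k V (OmegaSub k V φ)) ∧
    (∀ φ ψ, PPUneg k V b φ → PPUneg k V b ψ →
      (DvdLe b φ ψ ↔ OmegaSub k V φ ≤ OmegaSub k V ψ)) ∧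
    (∀ U : Submodule k ((ℤ →₀ V) ⧸ Vneg k V), FGSubQ k V U →
      ∃ φ, PPUneg k V b φ ∧ OmegaSub k V φ = U) ∧
    (∀ φ ψ, PPUneg k V b φ → PPUneg k V b ψ → OmegaSub k V φ = OmegaSub k V ψ → φ = ψ) ∧
    (∀ φ ψ, PPUneg k V b φ → PPUneg k V b ψ →
      (∃ j, IsJoinD b φ ψ j) ∧ (∃ m, IsMeetD b φ ψ m)) ∧
    (∀ x y z m j J M, PPUneg k V b x → PPUneg k V b y → PPUneg k V b z →
      DvdLe b x z → IsMeetD b y z m → IsJoinD b x m j → IsJoinD b x y J →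
      IsMeetD b J z M → j = M) := by
  have hfg {φ} (hφ : PPUneg k V b φ) : FGSubQ k V (OmegaSub k V φ) := hφ.1.1.fgSubQ_omegaSub
  have hsurj {U} (hU : FGSubQ k V U) := exists_ppuNeg_omegaSub_eq hsymm haniso hU
  refine ⟨fun φ => hfg, fun φ ψ => dvdLe_iff, fun U => hsurj,
    fun φ ψ => PPUneg.eq_of_omegaSub_eq haniso, fun φ ψ hφ hψ => ⟨?_, ?_⟩, ?_⟩
  · obtain ⟨j, hj, hjΩ⟩ := hsurj ((hfg hφ).sup (hfg hψ))
    exact ⟨j, (isJoinD_iff hsymm haniso hφ hψ hj).2 hjΩ⟩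
  · obtain ⟨m, hm, hmΩ⟩ := hsurj ((hfg hφ).inf (hfg hψ))
    exact ⟨m, (isMeetD_iff hsymm haniso hφ hψ hm).2 hmΩ⟩
  · intro x y z m j J M hx hy hz hxz hm hj hJ hM
    have hmΩ := (isMeetD_iff hsymm haniso hy hz hm.1).1 hm
    have hjΩ := (isJoinD_iff hsymm haniso hx hm.1 hj.1).1 hj
    have hJΩ := (isJoinD_iff hsymm haniso hx hy hJ.1).1 hJ
    have hMΩ := (isMeetD_iff hsymm haniso hJ.1 hz hM.1).1 hM
    refine PPUneg.eq_of_omegaSub_eq haniso hj.1 hM.1 ?_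
    rw [hjΩ, hmΩ, hMΩ, hJΩ, sup_inf_assoc_of_le _ ((dvdLe_iff hx hz).1 hxz)]
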